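/- Let f be a real binary form of degree d ≥ 2 with d distinct real roots. Then for every (a,b) ≠ (0,0), the real binary form a·∂f/∂x + b·∂f/∂y of degree d−1 has d−1 distinct real roots. -/

import Mathlib

open MvPolynomial

noncomputable section

/-- The real linear binary form `a·x + b·y`. -/
def lin (a b : ℝ) : MvPolynomial (Fin 2) ℝ := C a * X 0 + C b * X 1

/-- `f` is a sum of `r` terms `cⱼ · ℓⱼ^d` with `ℓⱼ` nonzero real linear forms. -/
def HasDecomp (f : MvPolynomial (Fin 2) ℝ) (d r : ℕ) : Prop :=
  ∃ c a b : Fin r → ℝ, (∀ j, (a j, b j) ≠ (0, 0)) ∧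
    f = ∑ j, C (c j) * lin (a j) (b j) ^ d

/-- The real (symmetric) rank of a binary form of degree `d`:
the least number of `d`-th powers of real linear forms needed to write `f`. -/
def realRank (f : MvPolynomial (Fin 2) ℝ) (d : ℕ) : ℕ :=
  sInf {r | HasDecomp f d r}

/-- The set of real projective roots of a binary form. -/
def projRoots (f : MvPolynomial (Fin 2) ℝ) : Set (Projectivization ℝ (Fin 2 → ℝ)) :=
  {p | eval p.rep f = 0}

/-- `f` is a product of `d` pairwise non-proportional real linear forms,
i.e. `f` has `d` distinct real roots. -/
def SplitsDistinct (f : MvPolynomial (Fin 2) ℝ) (d : ℕ) : Prop :=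
  ∃ a b : Fin d → ℝ, (∀ j, (a j, b j) ≠ (0, 0)) ∧
    (∀ i j, i ≠ j → a i * b j ≠ a j * b i) ∧
    f = ∏ j, lin (a j) (b j)

/-- `f` has distinct roots, i.e. it is squarefree as a complex polynomial. -/
def SquarefreeC (f : MvPolynomial (Fin 2) ℝ) : Prop :=
  Squarefree (MvPolynomial.map (algebraMap ℝ ℂ) f)

/-- The linear change of variables of `f` by the matrix `A`: `f(A(x,y))`. -/
def subst (A : Matrix (Fin 2) (Fin 2) ℝ) (f : MvPolynomial (Fin 2) ℝ) :
    MvPolynomial (Fin 2) ℝ :=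
  aeval (fun i => C (A i 0) * X 0 + C (A i 1) * X 1) f

/-- The complex rank of a real binary form of degree `d`. -/
def complexRank (f : MvPolynomial (Fin 2) ℝ) (d : ℕ) : ℕ :=
  sInf {r | ∃ a b : Fin r → ℂ, (∀ j, (a j, b j) ≠ (0, 0)) ∧
    MvPolynomial.map (algebraMap ℝ ℂ) f = ∑ j, (C (a j) * X 0 + C (b j) * X 1) ^ d}

/-! Let `D = a ∂/∂x + b ∂/∂y`, put `v = (a, b)`, choose `w` independent of `v`, and let `q` be the
restriction of `f` to the line `t ↦ w + t v`. By the chain rule `D f` restricts to `q'`. The line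
misses exactly one point of the projective line, namely `v`, and by Euler's identity `(D f)(v) = d
f(v)`, so `v` is a root of both forms or of neither. It remains to see that `q'` has exactly one
root fewer than `q`. The coefficient of `t ^ d` in `q` is `f(v)`: if `v` is not a root of `f`, then
`q` has `d` real roots and degree at most `d`, and if it is one, then `q` has `d - 1` real roots
and degree at most `d - 1`. Either way Rolle's theorem and the degree of `q'` settle the count. -/

open scoped Polynomial OnePoint LinearAlgebra.Projectivization

section RestrictLine

variable {σ R : Type*} [CommSemiring R]

/-- The directional derivative `∑ i, vᵢ ∂/∂xᵢ`, as a derivation of the polynomial ring. -/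
def dirDeriv (v : σ → R) : Derivation R (MvPolynomial σ R) (MvPolynomial σ R) :=
  mkDerivation R fun i => C (v i)

/-- The restriction of a polynomial to the parametrised line `t ↦ w + t v`, as a polynomial in
the parameter `t`. -/
def restrictLine (w v : σ → R) : MvPolynomial σ R →ₐ[R] R[X] :=
  aeval fun i => Polynomial.C (v i) * Polynomial.X + Polynomial.C (w i)

theorem dirDeriv_eq_sum [Fintype σ] (v : σ → R) (p : MvPolynomial σ R) :
    dirDeriv v p = ∑ i, C (v i) * pderiv i p := by
  classical
  induction p using MvPolynomial.induction_on with
  | C r => simp [dirDeriv]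
  | add p q hp hq => simp only [map_add, mul_add, Finset.sum_add_distrib, hp, hq]
  | mul_X p j hp =>
    simp only [Derivation.leibniz, smul_eq_mul, mul_add, Finset.sum_add_distrib, pderiv_X,
      hp, Finset.mul_sum]
    simp [dirDeriv, mkDerivation_X, Pi.single_apply, mul_comm, mul_left_comm]

theorem isHomogeneous_dirDeriv [Finite σ] {p : MvPolynomial σ R} {n : ℕ}
    (hp : p.IsHomogeneous n) (v : σ → R) : (dirDeriv v p).IsHomogeneous (n - 1) := by
  have := Fintype.ofFinite σ
  rw [dirDeriv_eq_sum]
  exact IsHomogeneous.sum _ _ _ fun i _ => hp.pderiv.C_mul (v i)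

theorem eval_dirDeriv_self [Finite σ] {p : MvPolynomial σ R} {n : ℕ}
    (hp : p.IsHomogeneous n) (v : σ → R) : eval v (dirDeriv v p) = n * eval v p := by
  have := Fintype.ofFinite σ
  simpa [dirDeriv_eq_sum] using congrArg (eval v) hp.sum_X_mul_pderiv

theorem eval_restrictLine (w v : σ → R) (t : R) (p : MvPolynomial σ R) :
    (restrictLine w v p).eval t = eval (w + t • v) p := by
  induction p using MvPolynomial.induction_on with
  | C r => simp [restrictLine, Polynomial.algebraMap_eq]
  | add p q hp hq => simp only [map_add, Polynomial.eval_add, hp, hq]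
  | mul_X p i hp =>
    rw [map_mul, Polynomial.eval_mul, hp, map_mul]
    simp only [restrictLine, aeval_X, Polynomial.eval_add, Polynomial.eval_mul, Polynomial.eval_C,
      Polynomial.eval_X, eval_X, Pi.add_apply, Pi.smul_apply, smul_eq_mul]
    ring

theorem derivative_restrictLine (w v : σ → R) (p : MvPolynomial σ R) :
    (restrictLine w v p).derivative = restrictLine w v (dirDeriv v p) := by
  induction p using MvPolynomial.induction_on with
  | C r => simp [restrictLine, dirDeriv, Polynomial.algebraMap_eq]
  | add p q hp hq => simp only [map_add, hp, hq]
  | mul_X p i hp =>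
    rw [map_mul, Polynomial.derivative_mul, hp, Derivation.leibniz]
    simp only [restrictLine, dirDeriv, aeval_X, Polynomial.derivative_mul, Polynomial.derivative_C,
      zero_mul, Polynomial.derivative_X, mul_one, zero_add, add_zero, mkDerivation_X, smul_eq_mul,
      map_add, map_mul, algHom_C, Polynomial.algebraMap_eq]
    ring

theorem restrictLine_X (w v : σ → R) (i : σ) :
    restrictLine w v (X i) = Polynomial.C (v i) * Polynomial.X + Polynomial.C (w i) :=
  aeval_X _ i

theorem natDegree_restrictLine_X_le (w v : σ → R) (i : σ) :
    (restrictLine w v (X i)).natDegree ≤ 1 := by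
  rw [restrictLine_X]
  exact Polynomial.natDegree_linear_le

theorem restrictLine_monomial (w v : σ → R) (m : σ →₀ ℕ) (r : R) :
    restrictLine w v (monomial m r) =
      Polynomial.C r * (m.toMultiset.map fun i => restrictLine w v (X i)).prod := by
  rw [Finsupp.toMultiset_map, Finsupp.prod_toMultiset,
    Finsupp.prod_mapDomain_index (by simp) (by simp [pow_add])]
  simp only [restrictLine_X]
  rw [restrictLine, aeval_monomial, Polynomial.algebraMap_eq]

theorem natDegree_restrictLine_monomial_le (w v : σ → R) (m : σ →₀ ℕ) (r : R) :
    (restrictLine w v (monomial m r)).natDegree ≤ Multiset.card m.toMultiset := by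
  rw [restrictLine_monomial]
  refine (Polynomial.natDegree_C_mul_le _ _).trans <|
    (Polynomial.natDegree_multiset_prod_le _).trans ?_
  simpa using Multiset.sum_le_card_nsmul
    ((m.toMultiset.map fun i => restrictLine w v (X i)).map Polynomial.natDegree) 1
    (by simp [-Finsupp.mem_toMultiset, natDegree_restrictLine_X_le])

theorem coeff_card_restrictLine_monomial (w v : σ → R) (m : σ →₀ ℕ) (r : R) :
    (restrictLine w v (monomial m r)).coeff (Multiset.card m.toMultiset) =
      eval v (monomial m r) := by
  have hprod := Polynomial.coeff_multiset_prod_of_natDegree_le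
    (m.toMultiset.map fun i => restrictLine w v (X i)) 1
    (by simp [-Finsupp.mem_toMultiset, natDegree_restrictLine_X_le])
  rw [Multiset.card_map, mul_one, Multiset.map_map] at hprod
  rw [restrictLine_monomial, Polynomial.coeff_C_mul, hprod, eval_monomial,
    Finsupp.toMultiset_map, Finsupp.prod_toMultiset,
    Finsupp.prod_mapDomain_index (by simp) (by simp [pow_add])]
  simp [restrictLine_X]

theorem card_toMultiset_of_mem_support {p : MvPolynomial σ R} {n : ℕ} (hp : p.IsHomogeneous n)
    {m : σ →₀ ℕ} (hm : m ∈ p.support) : Multiset.card m.toMultiset = n :=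
  (Finsupp.card_toMultiset m).trans (hp.degree_eq_sum_deg_support hm).symm

theorem natDegree_restrictLine_le {p : MvPolynomial σ R} {n : ℕ} (hp : p.IsHomogeneous n)
    (w v : σ → R) : (restrictLine w v p).natDegree ≤ n := by
  rw [p.as_sum, map_sum]
  refine Polynomial.natDegree_sum_le_of_forall_le _ _ fun m hm => ?_
  rw [← card_toMultiset_of_mem_support hp hm]
  exact natDegree_restrictLine_monomial_le w v m _

theorem coeff_restrictLine {p : MvPolynomial σ R} {n : ℕ} (hp : p.IsHomogeneous n)
    (w v : σ → R) : (restrictLine w v p).coeff n = eval v p := by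
  conv_lhs => rw [p.as_sum]
  conv_rhs => rw [p.as_sum]
  rw [map_sum, map_sum, Polynomial.finsetSum_coeff]
  refine Finset.sum_congr rfl fun m hm => ?_
  rw [← card_toMultiset_of_mem_support hp hm, coeff_card_restrictLine_monomial]

theorem eval_smul_of_isHomogeneous {p : MvPolynomial σ R} {n : ℕ} (hp : p.IsHomogeneous n)
    (c : R) (u : σ → R) : eval (c • u) p = c ^ n * eval u p := by
  rw [eval_eq, eval_eq, Finset.mul_sum]
  refine Finset.sum_congr rfl fun m hm => ?_
  simp only [Pi.smul_apply, smul_eq_mul, mul_pow, Finset.prod_mul_distrib,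
    Finset.prod_pow_eq_pow_sum, ← hp.degree_eq_sum_deg_support hm]
  ring

end RestrictLine

section RealRooted

theorem encard_setOf_isRoot {R : Type*} [CommRing R] [IsDomain R] [DecidableEq R] {p : R[X]}
    (hp : p ≠ 0) : {t | p.IsRoot t}.encard = p.roots.toFinset.card := by
  rw [← Set.encard_coe_eq_coe_finsetCard]
  congr 1
  ext t
  simp [hp]

theorem encard_setOf_isRoot_derivative {p : ℝ[X]} {n : ℕ} (hn : n ≠ 0) (hdeg : p.natDegree ≤ n)
    (hroots : {t | p.IsRoot t}.encard = n) :
    {t | p.derivative.IsRoot t}.encard = (n - 1 : ℕ) := by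
  have hp : p ≠ 0 := by
    rintro rfl
    simp at hroots
  have hcard : p.roots.toFinset.card = n := by
    exact_mod_cast (encard_setOf_isRoot hp).symm.trans hroots
  have hdeg_ge : n ≤ p.natDegree :=
    hcard ▸ (Multiset.toFinset_card_le _).trans (Polynomial.card_roots' p)
  have hderiv : p.derivative ≠ 0 := fun h =>
    hn (by simpa [Polynomial.derivative_eq_zero.1 h] using hdeg_ge)
  have rolle := p.card_roots_toFinset_le_derivative
  have hupper : p.derivative.roots.toFinset.card ≤ p.natDegree - 1 :=
    (Multiset.toFinset_card_le _).trans <|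
      (Polynomial.card_roots' _).trans p.natDegree_derivative_le
  rw [encard_setOf_isRoot hderiv]
  norm_cast
  omega

end RealRooted

section ProjectiveLine

theorem mk_eq_mk_iff_mul_eq_mul {K : Type*} [Field K] {u v : Fin 2 → K} (hu : u ≠ 0)
    (hv : v ≠ 0) :
    Projectivization.mk K u hu = Projectivization.mk K v hv ↔ u 0 * v 1 = u 1 * v 0 := by
  rw [Projectivization.mk_eq_mk_iff']
  constructor
  · rintro ⟨c, rfl⟩
    simp only [Pi.smul_apply, smul_eq_mul]
    ring
  · intro h
    obtain hv0 | hv1 : v 0 ≠ 0 ∨ v 1 ≠ 0 :=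
      Fin.exists_fin_two.1 (Function.ne_iff.1 hv)
    · refine ⟨u 0 / v 0, funext <| Fin.forall_fin_two.2 ⟨?_, ?_⟩⟩
      · exact div_mul_cancel₀ _ hv0
      · rw [Pi.smul_apply, smul_eq_mul, div_mul_eq_mul_div, h, mul_div_cancel_right₀ _ hv0]
    · refine ⟨u 1 / v 1, funext <| Fin.forall_fin_two.2 ⟨?_, ?_⟩⟩
      · rw [Pi.smul_apply, smul_eq_mul, div_mul_eq_mul_div, ← h, mul_div_cancel_right₀ _ hv1]
      · exact div_mul_cancel₀ _ hv1

theorem exists_generalLinearGroup_col_zero_eq {K : Type*} [Field K] {v : Fin 2 → K}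
    (hv : v ≠ 0) : ∃ A : GL (Fin 2) K, A.1.col 0 = v := by
  obtain hv0 | hv1 : v 0 ≠ 0 ∨ v 1 ≠ 0 := Fin.exists_fin_two.1 (Function.ne_iff.1 hv)
  · refine ⟨.mkOfDetNeZero !![v 0, 0; v 1, 1] (by simpa using hv0), ?_⟩
    ext i
    fin_cases i <;> rfl
  · refine ⟨.mkOfDetNeZero !![v 0, 1; v 1, 0] (by simpa using hv1), ?_⟩
    ext i
    fin_cases i <;> rfl

theorem encard_eq_encard_preimage_coe_add {X : Type*} (S : Set (OnePoint X)) [Decidable (∞ ∈ S)] :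
    S.encard = ((↑) ⁻¹' S : Set X).encard + if ∞ ∈ S then 1 else 0 := by
  have hcoe : ((↑) ⁻¹' S : Set X).encard = (S \ {∞}).encard := by
    rw [← OnePoint.coe_injective.encard_image, Set.image_preimage_eq_inter_range,
      ← OnePoint.compl_infty, Set.sdiff_eq]
  rw [hcoe]
  split_ifs with h
  · exact (Set.encard_sdiff_singleton_add_one h).symm
  · rw [Set.sdiff_singleton_eq_self h, add_zero]

/-- The chart of the projective line in which the first column of `A` is the point at infinity
and `t` stands for the point `w + t v`, where `v` and `w` are the columns of `A`. -/
def lineChart {K : Type*} [Field K] [DecidableEq K] (A : GL (Fin 2) K) :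
    OnePoint K ≃ ℙ K (Fin 2 → K) :=
  (OnePoint.equivProjectivization K).trans (MulAction.toPerm A)

theorem mk_mem_projRoots_iff {g : MvPolynomial (Fin 2) ℝ} {n : ℕ} (hg : g.IsHomogeneous n)
    {u : Fin 2 → ℝ} (hu : u ≠ 0) :
    Projectivization.mk ℝ u hu ∈ projRoots g ↔ eval u g = 0 := by
  obtain ⟨c, hc⟩ := Projectivization.exists_smul_eq_mk_rep ℝ u hu
  rw [projRoots, Set.mem_ofPred_eq, ← hc, Units.smul_def, eval_smul_of_isHomogeneous hg]
  simp

theorem lineChart_infty_mem_projRoots_iff {g : MvPolynomial (Fin 2) ℝ} {n : ℕ}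
    (hg : g.IsHomogeneous n) (A : GL (Fin 2) ℝ) :
    lineChart A ∞ ∈ projRoots g ↔ eval (A.1.col 0) g = 0 := by
  rw [lineChart, Equiv.trans_apply, OnePoint.equivProjectivization_apply_infinity,
    MulAction.toPerm_apply, Projectivization.smul_mk, mk_mem_projRoots_iff hg]
  have : A • ![1, 0] = A.1.col 0 := by
    simp [Units.smul_def, Matrix.mulVec_eq_sum, Matrix.col_def]
  rw [this]

theorem lineChart_coe_mem_projRoots_iff {g : MvPolynomial (Fin 2) ℝ} {n : ℕ}
    (hg : g.IsHomogeneous n) (A : GL (Fin 2) ℝ) (t : ℝ) :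
    lineChart A t ∈ projRoots g ↔ (restrictLine (A.1.col 1) (A.1.col 0) g).IsRoot t := by
  rw [lineChart, Equiv.trans_apply, OnePoint.equivProjectivization_apply_coe,
    MulAction.toPerm_apply, Projectivization.smul_mk, mk_mem_projRoots_iff hg,
    Polynomial.IsRoot, eval_restrictLine]
  have : A • ![t, 1] = A.1.col 1 + t • A.1.col 0 := by
    simp [Units.smul_def, Matrix.mulVec_eq_sum, Matrix.col_def, add_comm]
  rw [this]

theorem encard_projRoots {g : MvPolynomial (Fin 2) ℝ} {n : ℕ} (hg : g.IsHomogeneous n)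
    (A : GL (Fin 2) ℝ) :
    (projRoots g).encard = {t | (restrictLine (A.1.col 1) (A.1.col 0) g).IsRoot t}.encard +
      if eval (A.1.col 0) g = 0 then 1 else 0 := by
  classical
  rw [← (lineChart A).image_preimage (projRoots g), (lineChart A).injective.encard_image,
    encard_eq_encard_preimage_coe_add]
  simp only [Set.mem_preimage, lineChart_infty_mem_projRoots_iff hg]
  congr 2
  ext t
  exact lineChart_coe_mem_projRoots_iff hg A t

end ProjectiveLine

section DistinctRoots

theorem eval_lin (a b : ℝ) (u : Fin 2 → ℝ) : eval u (lin a b) = a * u 0 + b * u 1 := by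
  simp [lin]

theorem isHomogeneous_lin (a b : ℝ) : (lin a b).IsHomogeneous 1 :=
  (isHomogeneous_C_mul_X a 0).add (isHomogeneous_C_mul_X b 1)

theorem SplitsDistinct.isHomogeneous {f : MvPolynomial (Fin 2) ℝ} {d : ℕ}
    (hf : SplitsDistinct f d) : f.IsHomogeneous d := by
  obtain ⟨a, b, -, -, rfl⟩ := hf
  simpa using IsHomogeneous.prod Finset.univ _ _ fun j _ => isHomogeneous_lin (a j) (b j)

theorem SplitsDistinct.encard_projRoots {f : MvPolynomial (Fin 2) ℝ} {d : ℕ}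
    (hf : SplitsDistinct f d) : (projRoots f).encard = d := by
  have hhom := hf.isHomogeneous
  obtain ⟨a, b, hne, hprop, rfl⟩ := hf
  have hroot_ne (j : Fin d) : ![b j, -a j] ≠ 0 := fun h => hne j (by simpa [and_comm] using h)
  let root (j : Fin d) : ℙ ℝ (Fin 2 → ℝ) := Projectivization.mk ℝ ![b j, -a j] (hroot_ne j)
  have hinj : Function.Injective root := fun i j hij => by
    by_contra hij_ne
    have hdet : b i * -a j = -a i * b j := (mk_eq_mk_iff_mul_eq_mul _ _).1 hij
    exact hprop i j hij_ne (by linarith)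
  have hrange : projRoots (∏ j, lin (a j) (b j)) = Set.range root := by
    ext p
    induction p using Projectivization.ind with
    | h u hu =>
      simp only [mk_mem_projRoots_iff hhom, map_prod, eval_lin, Finset.prod_eq_zero_iff,
        Finset.mem_univ, true_and, Set.mem_range, root, mk_eq_mk_iff_mul_eq_mul]
      refine exists_congr fun j => ?_
      change _ ↔ b j * u 1 = -a j * u 0
      rw [neg_mul, eq_neg_iff_add_eq_zero, add_comm]
  rw [hrange, ← Set.image_univ, hinj.encard_image, Set.encard_univ]
  simp

theorem encard_projRoots_dirDeriv {f : MvPolynomial (Fin 2) ℝ} {d : ℕ} (hd : 2 ≤ d)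
    (hf : f.IsHomogeneous d) (hroots : (projRoots f).encard = d) {v : Fin 2 → ℝ} (hv : v ≠ 0) :
    (projRoots (dirDeriv v f)).encard = (d - 1 : ℕ) := by
  obtain ⟨A, rfl⟩ := exists_generalLinearGroup_col_zero_eq hv
  have hdeg := natDegree_restrictLine_le hf (A.1.col 1) (A.1.col 0)
  have heuler : eval (A.1.col 0) (dirDeriv (A.1.col 0) f) = 0 ↔ eval (A.1.col 0) f = 0 := by
    rw [eval_dirDeriv_self hf, mul_eq_zero, Nat.cast_eq_zero, or_iff_right (by omega)]
  rw [encard_projRoots hf A] at hroots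
  rw [encard_projRoots (isHomogeneous_dirDeriv hf _) A, ← derivative_restrictLine]
  simp only [heuler]
  obtain ⟨n, rfl⟩ : ∃ n, d = n + 1 := ⟨d - 1, by omega⟩
  split_ifs at hroots ⊢ with hinf
  · have hdeg_lt := Polynomial.natDegree_le_pred hdeg ((coeff_restrictLine hf _ _).trans hinf)
    rw [Nat.cast_succ] at hroots
    rw [encard_setOf_isRoot_derivative (by omega) hdeg_lt
      (ENat.add_left_injective_of_ne_top ENat.one_ne_top hroots)]
    norm_cast
    omega
  · rw [encard_setOf_isRoot_derivative (by omega) hdeg (by simpa using hroots), add_zero]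

end DistinctRoots

/-- if a real binary form of degree `d ≥ 2` has `d` distinct real roots
(it is a product of `d` pairwise non-proportional real linear forms), then for every
`(a,b) ≠ (0,0)` the form `a·∂f/∂x + b·∂f/∂y` has `d - 1` distinct real roots. -/
theorem stmt8 (d : ℕ) (hd : 2 ≤ d) (f : MvPolynomial (Fin 2) ℝ)
    (hsplit : SplitsDistinct f d) :
    ∀ a b : ℝ, (a, b) ≠ (0, 0) →
      (projRoots (C a * pderiv 0 f + C b * pderiv 1 f)).ncard = d - 1 := by
  intro a b hab
  have hv : ![a, b] ≠ 0 := by simpa using hab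
  have hderiv : C a * pderiv 0 f + C b * pderiv 1 f = dirDeriv ![a, b] f := by
    simp [dirDeriv_eq_sum]
  rw [hderiv, Set.ncard,
    encard_projRoots_dirDeriv hd hsplit.isHomogeneous hsplit.encard_projRoots hv,
    ENat.toNat_natCast]
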